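/- arXiv:2004.01080 — 2 statements merged into one kernel-verified Lean document; each statement's English description precedes it below -/
import Mathlib

section
/- For every positive integer n, the set A_n = {π(kn) : k ∈ ℤ⁺} contains infinitely many P_2-numbers, i.e., numbers that are products of at most two primes. -/
/-!
Call `m ≥ 1` missed if it is not of the form `π(kn)`. If the `m`-th prime `p` is followed by the
prime `q` and `m` is missed, then there is no multiple of `n` in `[p, q)`, so `q - p ≤ n`. Hence
the missed `m ≤ π(x)` are at most as many as the pairs of primes `p, p + d` with `p ≤ x` and
`1 ≤ d ≤ n` (`card_missed_le`). By an upper bound sieve there are `O_n(x / log² x)` such pairs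
(`card_prime_pairs_le`). On the other hand, with `X = π(x) ≫ x / log x`, the number of
`P_2`-numbers up to `X` exceeds every constant multiple of `X / log X ≫ x / log² x`
(`eventually_card_P2_ge`), so all large scales contain `P_2`-numbers that are not missed, in
number exceeding any given bound.

The sieve is Selberg's. Mathlib reduces it to a diagonalised quadratic form in the weights;
`siftedSum_le_selberg` inserts the optimal weights and gives `N / S + z⁸`, where `S` is the Selberg
denominator. For the values `n (n + k)` the density is `2^ω(d) / d`, and `S ≫ log² z` is proved
without any asymptotics (`selbergSum_ge`): writing `h(l)` as the sum of `2^Ω(m) / m` over the `m`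
with radical `l` gives `S ≥ ∑_{m ≤ z} 2^Ω(m) / m`, restricted to `m` coprime to `2k`, and since
`2^Ω ≥ τ` this is at least the square of a harmonic sum over `a ≡ 1 mod 2k`. Since `k` is fixed,
the loss of a factor depending on `k` does not matter.

The `P_2`-count needs only Chebyshev's bound and the divergence of `∑ 1/p`: the weaker form
(more than any constant times `X / log X`) of the lower bound with `log log X` is sufficient.
-/

section

open Finset Nat ArithmeticFunction BoundingSieve Filter
open scoped ArithmeticFunction.Moebius ArithmeticFunction.omega ArithmeticFunction.Omega

/-! ### Selberg's upper bound sieve -/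

/-- The Selberg denominator `S = ∑ h(l)` over the divisors `l ≤ z` of the sifting product, where
`h(l) = ν(l) ∏_{p ∣ l} (1 - ν(p))⁻¹` is Mathlib's `selbergTerms`. -/
noncomputable def selbergSum (s : BoundingSieve) (z : ℕ) : ℝ :=
  ∑ l ∈ s.prodPrimes.divisors with l ≤ z, s.selbergTerms l

/-- The optimal `Λ²` weights of level `z`,
`w(d) = μ(d) / (ν(d) S) · ∑_{d ∣ m, m ≤ z} h(m)`, set to `0` off the divisors of the sifting
product. -/
noncomputable def selbergWeight (s : BoundingSieve) (z d : ℕ) : ℝ :=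
  if d ∣ s.prodPrimes then
    μ d * (s.nu d)⁻¹ * (selbergSum s z)⁻¹ *
      ∑ m ∈ s.prodPrimes.divisors with m ≤ z, if d ∣ m then s.selbergTerms m else 0
  else 0

lemma selbergSum_pos (s : BoundingSieve) {z : ℕ} (hz : 1 ≤ z) : 0 < selbergSum s z := by
  refine sum_pos (fun l hl => selbergTerms_pos (dvd_of_mem_divisors (mem_filter.1 hl).1)) ⟨1, ?_⟩
  simp [hz, prodPrimes_ne_zero]

lemma selbergWeight_one (s : BoundingSieve) {z : ℕ} (hz : 1 ≤ z) : selbergWeight s z 1 = 1 := by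
  have h := (selbergSum_pos s hz).ne'
  have h1 : s.nu 1 = 1 := s.nu_mult.map_one
  simp only [selbergWeight, one_dvd, if_true, h1]
  change _ * selbergSum s z = 1
  simp [h]

lemma selbergWeight_eq_zero (s : BoundingSieve) {z d : ℕ} (hd : z < d) :
    selbergWeight s z d = 0 := by
  unfold selbergWeight
  split_ifs with h
  · rw [sum_eq_zero, mul_zero]
    intro m hm
    rw [if_neg]
    intro hdm
    have hm' := mem_filter.1 hm
    have := Nat.le_of_dvd (Nat.pos_of_mem_divisors hm'.1) hdm
    omega
  · rfl

/-- A crude bound: the inner sum is at most `S`, and `1 / ν(d) ≤ d ≤ z`. -/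
lemma abs_selbergWeight_le (s : BoundingSieve) {z : ℕ} (hz : 1 ≤ z)
    (hnu : ∀ d, d ∣ s.prodPrimes → (1 : ℝ) / d ≤ s.nu d) (d : ℕ) :
    |selbergWeight s z d| ≤ z := by
  rcases lt_or_ge z d with h | h
  · simp [selbergWeight_eq_zero s h]
  unfold selbergWeight
  split_ifs with hd
  · have hS := selbergSum_pos s hz
    have hd0 : 0 < d := Nat.pos_of_dvd_of_pos hd (Nat.pos_of_ne_zero prodPrimes_ne_zero)
    have hnup := nu_pos_of_dvd_prodPrimes hd
    have h1 : (s.nu d)⁻¹ ≤ z := by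
      have := hnu d hd
      rw [inv_le_comm₀ hnup (by exact_mod_cast hz)]
      refine le_trans ?_ this
      rw [one_div]
      gcongr
    have h2 : (∑ m ∈ s.prodPrimes.divisors with m ≤ z,
        if d ∣ m then s.selbergTerms m else 0) ≤ selbergSum s z := by
      refine sum_le_sum fun m hm => ?_
      have := selbergTerms_pos (s := s) (dvd_of_mem_divisors (mem_filter.1 hm).1)
      split_ifs <;> linarith
    have h3 : 0 ≤ (∑ m ∈ s.prodPrimes.divisors with m ≤ z,
        if d ∣ m then s.selbergTerms m else 0) := by
      refine sum_nonneg fun m hm => ?_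
      have := selbergTerms_pos (s := s) (dvd_of_mem_divisors (mem_filter.1 hm).1)
      split_ifs <;> linarith
    have h4 : |(μ d : ℝ)| ≤ 1 := by
      exact_mod_cast abs_moebius_le_one
    rw [abs_mul, abs_mul, abs_mul, abs_of_nonneg h3, abs_of_pos (inv_pos.2 hnup),
      abs_of_pos (inv_pos.2 hS)]
    calc _ ≤ 1 * (z : ℝ) * (selbergSum s z)⁻¹ * selbergSum s z := by gcongr
      _ = z := by field_simp
  · simp

/-- The orthogonality relation that diagonalises the quadratic form: summing `μ` over the `d` with
`l ∣ d ∣ m` vanishes unless `l = m`. -/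
lemma sum_moebius_between (P l m : ℕ) (hP : Squarefree P) (hl : l ∣ P) (hm : m ∣ P) :
    (∑ d ∈ P.divisors, if l ∣ d ∧ d ∣ m then (μ d : ℝ) else 0) = if l = m then (μ l : ℝ) else 0 := by
  have hP0 := hP.ne_zero
  by_cases hlm : l ∣ m
  · obtain ⟨e, rfl⟩ := hlm
    have hsq : Squarefree (l * e) := hP.squarefree_of_dvd hm
    have hl0 : l ≠ 0 := by rintro rfl; simp at hsq
    have he0 : e ≠ 0 := by rintro rfl; simp at hsq
    have hcop : l.Coprime e := Nat.coprime_of_squarefree_mul hsq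
    have : (∑ d ∈ P.divisors, if l ∣ d ∧ d ∣ l * e then (μ d : ℝ) else 0)
        = ∑ c ∈ e.divisors, (μ (l * c) : ℝ) := by
      rw [← sum_filter]
      symm
      refine sum_bij (fun c _ => l * c) ?_ ?_ ?_ ?_
      · intro c hc
        have hce := dvd_of_mem_divisors hc
        have : l * c ∣ l * e := Nat.mul_dvd_mul_left l hce
        simp [hP0, this.trans hm, this]
      · intro a _ b _ h
        exact Nat.eq_of_mul_eq_mul_left (Nat.pos_of_ne_zero hl0) h
      · intro b hb
        obtain ⟨-, ⟨c, rfl⟩, h2⟩ := mem_filter.1 hb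
        refine ⟨c, ?_, rfl⟩
        rw [Nat.mem_divisors]
        exact ⟨Nat.dvd_of_mul_dvd_mul_left (Nat.pos_of_ne_zero hl0) h2, he0⟩
      · intros; rfl
    rw [this]
    have h2 : ∑ c ∈ e.divisors, (μ (l * c) : ℝ) = μ l * ∑ c ∈ e.divisors, (μ c : ℝ) := by
      rw [mul_sum]
      refine sum_congr rfl fun c hc => ?_
      rw [isMultiplicative_moebius.map_mul_of_coprime
        (hcop.coprime_dvd_right (dvd_of_mem_divisors hc))]
      push_cast; rfl
    rw [h2]
    have h3 : ∑ c ∈ e.divisors, (μ c : ℝ) = if e = 1 then 1 else 0 := by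
      have := congrArg (fun f : ArithmeticFunction ℤ => f e) moebius_mul_coe_zeta
      simp only [coe_mul_zeta_apply, one_apply] at this
      exact_mod_cast this
    rw [h3]
    by_cases he : e = 1
    · simp [he]
    · have : l ≠ l * e := by
        intro h
        exact he (Nat.eq_of_mul_eq_mul_left (Nat.pos_of_ne_zero hl0) (by omega))
      simp [he, this]
  · have : l ≠ m := by rintro rfl; exact hlm dvd_rfl
    rw [if_neg this]
    refine sum_eq_zero fun d _ => if_neg ?_
    rintro ⟨a, b⟩
    exact hlm (a.trans b)

/-- The minimum `1 / S` of the diagonalised quadratic form is attained at the weights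
`selbergWeight`. -/
lemma mainSum_selbergWeight (s : BoundingSieve) {z : ℕ} (hz : 1 ≤ z) :
    s.mainSum (lambdaSquared (selbergWeight s z)) = (selbergSum s z)⁻¹ := by
  have hS := selbergSum_pos s hz
  rw [mainSum_lambdaSquared_eq_sum_mul_sum_sq]
  have key : ∀ l ∈ s.prodPrimes.divisors,
      (∑ d ∈ divisors s.prodPrimes, if l ∣ d then s.nu d * selbergWeight s z d else 0)
      = (selbergSum s z)⁻¹ * if l ≤ z then μ l * s.selbergTerms l else 0 := by
    intro l hl
    have hlP := dvd_of_mem_divisors hl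
    calc _ = ∑ d ∈ divisors s.prodPrimes, ∑ m ∈ s.prodPrimes.divisors with m ≤ z,
          (selbergSum s z)⁻¹ * s.selbergTerms m * (if l ∣ d ∧ d ∣ m then (μ d : ℝ) else 0) := by
          refine sum_congr rfl fun d hd => ?_
          have hdP := dvd_of_mem_divisors hd
          have hnu := nu_ne_zero (s := s) hdP
          by_cases h : l ∣ d
          · simp only [h, if_true, selbergWeight, hdP, true_and]
            rw [mul_sum, mul_sum]
            refine sum_congr rfl fun m _ => ?_
            split_ifs
            · field_simp
            · simp
          · simp [h]
      _ = ∑ m ∈ s.prodPrimes.divisors with m ≤ z,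
          (selbergSum s z)⁻¹ * s.selbergTerms m * (if l = m then (μ l : ℝ) else 0) := by
          rw [sum_comm]
          refine sum_congr rfl fun m hm => ?_
          rw [← mul_sum, sum_moebius_between _ _ _ s.prodPrimes_squarefree hlP
            (dvd_of_mem_divisors (mem_filter.1 hm).1)]
      _ = _ := by
          simp only [mul_ite, mul_zero, sum_ite_eq, mem_filter, hl, true_and]
          split_ifs
          · ring
          · rfl
  calc _ = ∑ l ∈ s.prodPrimes.divisors, (selbergSum s z)⁻¹ ^ 2 *
        (if l ≤ z then s.selbergTerms l else 0) := by
        refine sum_congr rfl fun l hl => ?_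
        have hh := selbergTerms_pos (s := s) (dvd_of_mem_divisors hl)
        have hmu : (μ l : ℝ) ^ 2 = 1 := by
          have := moebius_sq_eq_one_of_squarefree (squarefree_of_mem_divisors_prodPrimes hl)
          exact_mod_cast this
        rw [key l hl]
        split_ifs
        · rw [mul_pow, mul_pow, hmu]; field_simp
        · simp
    _ = _ := by
        rw [← mul_sum, ← sum_filter]
        change _ * selbergSum s z = _
        field_simp

/-- The `Λ²` coefficients are supported on `d ≤ z²` and bounded by `z⁴`, and the remainders there
are at most `z²`. This is far from sharp, but a fixed power of `z` is enough. -/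
lemma errSum_selbergWeight_le (s : BoundingSieve) {z : ℕ} (hz : 1 ≤ z)
    (hnu : ∀ d, d ∣ s.prodPrimes → (1 : ℝ) / d ≤ s.nu d)
    (hrem : ∀ d, d ∣ s.prodPrimes → |s.rem d| ≤ d) :
    s.errSum (lambdaSquared (selbergWeight s z)) ≤ (z : ℝ) ^ 8 := by
  have hsum : ∀ d : ℕ, ∑ e ∈ d.divisors, |selbergWeight s z e| ≤ (z : ℝ) ^ 2 := by
    intro d
    calc _ = ∑ e ∈ d.divisors with e ≤ z, |selbergWeight s z e| := by
          rw [sum_filter]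
          refine sum_congr rfl fun e _ => ?_
          split_ifs with h
          · rfl
          · rw [selbergWeight_eq_zero s (not_le.1 h), abs_zero]
      _ ≤ ∑ e ∈ d.divisors with e ≤ z, (z : ℝ) :=
          sum_le_sum fun e _ => abs_selbergWeight_le s hz hnu e
      _ ≤ ∑ e ∈ Icc 1 z, (z : ℝ) := by
          refine sum_le_sum_of_subset_of_nonneg ?_ (fun _ _ _ => by positivity)
          intro e he
          have := mem_filter.1 he
          exact mem_Icc.2 ⟨Nat.pos_of_mem_divisors this.1, this.2⟩
      _ = _ := by simp [sq]
  have hlam : ∀ d : ℕ, |lambdaSquared (selbergWeight s z) d| ≤ (z : ℝ) ^ 4 := by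
    intro d
    unfold lambdaSquared
    calc _ ≤ ∑ a ∈ d.divisors, ∑ b ∈ d.divisors,
            |selbergWeight s z a| * |selbergWeight s z b| := by
          refine (abs_sum_le_sum_abs _ _).trans (sum_le_sum fun a _ => ?_)
          refine (abs_sum_le_sum_abs _ _).trans (sum_le_sum fun b _ => ?_)
          split_ifs
          · rw [abs_mul]
          · rw [abs_zero]; positivity
      _ = (∑ e ∈ d.divisors, |selbergWeight s z e|) ^ 2 := by
          rw [sq, sum_mul_sum]
      _ ≤ ((z : ℝ) ^ 2) ^ 2 := by
          have := hsum d
          have h0 : 0 ≤ ∑ e ∈ d.divisors, |selbergWeight s z e| :=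
            sum_nonneg fun _ _ => abs_nonneg _
          gcongr
      _ = _ := by ring
  have hlam0 : ∀ d : ℕ, z ^ 2 < d → lambdaSquared (selbergWeight s z) d = 0 := by
    intro d hd
    unfold lambdaSquared
    refine sum_eq_zero fun a _ => sum_eq_zero fun b _ => ?_
    split_ifs with h
    · rcases lt_or_ge z a with ha | ha
      · rw [selbergWeight_eq_zero s ha, zero_mul]
      rcases lt_or_ge z b with hb | hb
      · rw [selbergWeight_eq_zero s hb, mul_zero]
      exfalso
      rcases Nat.eq_zero_or_pos (a * b) with h0 | h0
      · have : a.lcm b = 0 := by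
          rcases Nat.mul_eq_zero.1 h0 with rfl | rfl <;> simp
        omega
      have := Nat.le_of_dvd h0 (Nat.lcm_dvd_mul a b)
      nlinarith
    · rfl
  unfold errSum
  calc _ = ∑ d ∈ s.prodPrimes.divisors with d ≤ z ^ 2,
        |lambdaSquared (selbergWeight s z) d| * |s.rem d| := by
        rw [sum_filter]
        refine sum_congr rfl fun d _ => ?_
        split_ifs with h
        · rfl
        · rw [hlam0 d (not_le.1 h), abs_zero, zero_mul]
    _ ≤ ∑ d ∈ s.prodPrimes.divisors with d ≤ z ^ 2, (z : ℝ) ^ 4 * (z : ℝ) ^ 2 := by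
        refine sum_le_sum fun d hd => ?_
        have hd' := mem_filter.1 hd
        have h1 := hrem d (dvd_of_mem_divisors hd'.1)
        have h2 : (d : ℝ) ≤ (z : ℝ) ^ 2 := by exact_mod_cast hd'.2
        exact mul_le_mul (hlam d) (h1.trans h2) (abs_nonneg _) (by positivity)
    _ ≤ ∑ d ∈ Icc 1 (z ^ 2), (z : ℝ) ^ 4 * (z : ℝ) ^ 2 := by
        refine sum_le_sum_of_subset_of_nonneg ?_ (fun _ _ _ => by positivity)
        intro e he
        have := mem_filter.1 he
        exact mem_Icc.2 ⟨Nat.pos_of_mem_divisors this.1, this.2⟩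
    _ = _ := by simp; ring

/-- Selberg's upper bound sieve, with a crude error term. -/
theorem siftedSum_le_selberg (s : BoundingSieve) {z : ℕ} (hz : 1 ≤ z)
    (hnu : ∀ d, d ∣ s.prodPrimes → (1 : ℝ) / d ≤ s.nu d)
    (hrem : ∀ d, d ∣ s.prodPrimes → |s.rem d| ≤ d) :
    s.siftedSum ≤ s.totalMass / selbergSum s z + (z : ℝ) ^ 8 := by
  refine (siftedSum_le_mainSum_errSum_of_upperMoebius _
    (upperMoebius_lambdaSquared _ (selbergWeight_one s hz))).trans ?_
  rw [mainSum_selbergWeight s hz, div_eq_mul_inv]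
  gcongr
  exact errSum_selbergWeight_le s hz hnu hrem

/-! ### Lower bound for the Selberg denominator in dimension two -/

/-- The local density `2^ω(d) / d`: for squarefree `d` coprime to `k`, it is the proportion of
`n` with `d ∣ n (n + k)`. At `0` it has the value `0`, by division by zero. -/
noncomputable def twinNu : ArithmeticFunction ℝ :=
  ⟨fun d => 2 ^ ω d / d, by simp⟩

lemma twinNu_apply (d : ℕ) : twinNu d = 2 ^ ω d / d := rfl

lemma twinNu_isMultiplicative : twinNu.IsMultiplicative := by
  refine ⟨by simp [twinNu_apply], fun {m n} h => ?_⟩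
  rw [twinNu_apply, twinNu_apply, twinNu_apply, cardDistinctFactors_mul h, pow_add]
  push_cast
  rw [mul_div_mul_comm]

/-- The completely multiplicative function with value `2^Ω(m) / m` at odd `m`. It is set to `0` at
even `m`: the Euler factor at `2` would be `∑ 1`, which diverges. -/
noncomputable def twinF : ℕ →* ℝ where
  toFun m := if Odd m then 2 ^ Ω m / m else 0
  map_one' := by simp
  map_mul' m n := by
    by_cases hm : Odd m
    · by_cases hn : Odd n
      · rw [if_pos hm, if_pos hn, if_pos (hm.mul hn), cardFactors_mul hm.pos.ne' hn.pos.ne',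
          pow_add]
        push_cast
        rw [mul_div_mul_comm]
      · rw [if_neg hn, if_neg (by simp [Nat.odd_mul, hn]), mul_zero]
    · rw [if_neg hm, if_neg (by simp [Nat.odd_mul, hm]), zero_mul]

lemma twinF_apply (m : ℕ) : twinF m = if Odd m then (2 : ℝ) ^ Ω m / m else 0 := rfl

lemma twinF_nonneg (m : ℕ) : 0 ≤ twinF m := by
  rw [twinF_apply]; split_ifs <;> positivity

lemma norm_twinF_prime_lt {p : ℕ} (hp : p.Prime) : ‖twinF p‖ < 1 := by
  rw [Real.norm_of_nonneg (twinF_nonneg p), twinF_apply]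
  split_ifs with h
  · rw [cardFactors_apply_prime hp, pow_one, div_lt_one (by exact_mod_cast hp.pos)]
    have h1 : p ≠ 2 := by rintro rfl; revert h; decide
    have := hp.two_le
    exact_mod_cast (by omega : 2 < p)
  · norm_num

lemma twinF_eq_twinNu {l : ℕ} (hl : Squarefree l) (ho : Odd l) : twinF l = twinNu l := by
  rw [twinF_apply, if_pos ho, twinNu_apply,
    (cardDistinctFactors_eq_cardFactors_iff_squarefree hl.ne_zero).2 hl]

lemma selbergTerms_eq_twinF (s : BoundingSieve) (hs : s.nu = twinNu) {l : ℕ} (hl : Squarefree l)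
    (ho : Odd l) :
    s.selbergTerms l = twinF l * ∏ p ∈ l.primeFactors, (1 - twinF p)⁻¹ := by
  rw [selbergTerms_apply, hs, twinF_eq_twinNu hl ho]
  congr 1
  refine prod_congr rfl fun p hp => ?_
  have hpp := prime_of_mem_primeFactors hp
  rw [twinF_eq_twinNu hpp.squarefree (ho.of_dvd_nat (dvd_of_mem_primeFactors hp))]

/-- Expanding each `(1 - 2/p)⁻¹` as a geometric series, `h(l)` is the sum of `twinF` over all
integers with radical `l`; any finite part of that sum is therefore at most `h(l)`. -/
lemma sum_twinF_fiber_le {l : ℕ} (B : Finset ℕ)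
    (hB : ∀ m ∈ B, m ≠ 0 ∧ ∏ p ∈ m.primeFactors, p = l) :
    ∑ m ∈ B, twinF m ≤ twinF l * ∏ p ∈ l.primeFactors, (1 - twinF p)⁻¹ := by
  have hsum := (EulerProduct.summable_and_hasSum_factoredNumbers_prod_filter_prime_geometric
    (f := twinF) norm_twinF_prime_lt l.primeFactors).2
  rw [filter_true_of_mem (fun p hp => prime_of_mem_primeFactors hp)] at hsum
  have hdvd : ∀ m ∈ B, l ∣ m := fun m hm => (hB m hm).2 ▸ Nat.prod_primeFactors_dvd m
  have hmem : ∀ m ∈ B, m / l ∈ factoredNumbers l.primeFactors := by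
    intro m hm
    obtain ⟨hm0, hml⟩ := hB m hm
    have hpf : m.primeFactors = l.primeFactors := by
      rw [← hml, Nat.primeFactors_prod (fun p hp => prime_of_mem_primeFactors hp)]
    rw [mem_factoredNumbers_iff_primeFactors_subset, ← hpf]
    have h0 : m / l ≠ 0 := by
      intro h
      have := Nat.div_mul_cancel (hdvd m hm)
      rw [h] at this
      omega
    exact ⟨h0, Nat.primeFactors_mono (Nat.div_dvd_of_dvd (hdvd m hm)) hm0⟩
  have hfac : ∑ m ∈ B, twinF m = twinF l * ∑ m ∈ B, twinF (m / l) := by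
    rw [mul_sum]
    refine sum_congr rfl fun m hm => ?_
    rw [← map_mul, Nat.mul_div_cancel' (hdvd m hm)]
  rw [hfac]
  refine mul_le_mul_of_nonneg_left ?_ (twinF_nonneg l)
  let T : Finset (factoredNumbers l.primeFactors) :=
    B.attach.image fun m => ⟨m.1 / l, hmem m.1 m.2⟩
  have hT : ∑ m ∈ B, twinF (m / l) = ∑ t ∈ T, twinF t := by
    rw [sum_image, ← sum_attach B]
    intro a _ b _ h
    have h' : a.1 / l = b.1 / l := congrArg Subtype.val h
    apply Subtype.ext
    rw [← Nat.div_mul_cancel (hdvd a.1 a.2), h', Nat.div_mul_cancel (hdvd b.1 b.2)]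
  rw [hT]
  exact sum_le_hasSum T (fun i _ => twinF_nonneg i) hsum

lemma card_divisors_le_two_pow {m : ℕ} (hm : m ≠ 0) : #m.divisors ≤ 2 ^ Ω m := by
  rw [Nat.card_divisors hm, cardFactors_eq_sum_factorization, Finsupp.sum, ← Finset.prod_pow_eq_pow_sum,
    Nat.support_factorization]
  refine prod_le_prod' fun p _ => ?_
  exact Nat.lt_two_pow_self

/-- Squaring `∑ 1/a` gives each `m` with weight at most `τ(m) / m ≤ 2^Ω(m) / m`. -/
lemma sum_inv_sq_le_sum_twinF (A B : Finset ℕ) (hA : ∀ a ∈ A, Odd a)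
    (hAB : ∀ a ∈ A, ∀ b ∈ A, a * b ∈ B) :
    (∑ a ∈ A, (1 : ℝ) / a) ^ 2 ≤ ∑ m ∈ B, twinF m := by
  rw [sq, sum_mul_sum, ← sum_product']
  rw [← sum_fiberwise_of_maps_to (s := A ×ˢ A) (t := B) (g := fun x => x.1 * x.2)
    (fun x hx => hAB _ (mem_product.1 hx).1 _ (mem_product.1 hx).2)]
  refine sum_le_sum fun m _ => ?_
  rcases (filter (fun x : ℕ × ℕ => x.1 * x.2 = m) (A ×ˢ A)).eq_empty_or_nonempty with he | ⟨x, hx⟩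
  · rw [he, sum_empty]; exact twinF_nonneg m
  have hodd : Odd m := by
    obtain ⟨h1, h2⟩ := mem_filter.1 hx
    rw [← h2]
    exact (hA _ (mem_product.1 h1).1).mul (hA _ (mem_product.1 h1).2)
  have hm0 : m ≠ 0 := hodd.pos.ne'
  rw [twinF_apply, if_pos hodd]
  calc _ = ∑ x ∈ A ×ˢ A with x.1 * x.2 = m, (1 : ℝ) / m := by
        refine sum_congr rfl fun x hx => ?_
        rw [← (mem_filter.1 hx).2]
        push_cast
        rw [_root_.div_mul_div_comm, one_mul]
    _ = #{x ∈ A ×ˢ A | x.1 * x.2 = m} * ((1 : ℝ) / m) := by simp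
    _ ≤ (2 : ℝ) ^ Ω m * (1 / m) := by
        gcongr
        have : #{x ∈ A ×ˢ A | x.1 * x.2 = m} ≤ #m.divisorsAntidiagonal := by
          refine card_le_card fun x hx => ?_
          exact mem_divisorsAntidiagonal.2 ⟨(mem_filter.1 hx).2, hm0⟩
        rw [← Nat.map_div_right_divisors, card_map] at this
        exact_mod_cast this.trans (card_divisors_le_two_pow hm0)
    _ = _ := by ring

/-- The progression `1 mod M` carries at least `1 / M` of the harmonic sum. -/
lemma log_le_sum_inv {M J : ℕ} (hM : 0 < M) :
    Real.log (J + 1) / M ≤ ∑ a ∈ (range J).image (fun j => 1 + M * j), (1 : ℝ) / a := by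
  rw [sum_image (by
    intro a _ b _ h
    have h' : 1 + M * a = 1 + M * b := h
    exact Nat.eq_of_mul_eq_mul_left hM (by omega))]
  have h := log_add_one_le_harmonic J
  have hM' : (1 : ℝ) ≤ M := by exact_mod_cast hM
  calc _ ≤ ((harmonic J : ℚ) : ℝ) / M := by push_cast at h; gcongr
    _ = ∑ j ∈ range J, (1 : ℝ) / (M * (j + 1)) := by
        rw [harmonic, Rat.cast_sum, sum_div]
        refine sum_congr rfl fun j _ => ?_
        push_cast
        field_simp
    _ ≤ _ := by
        refine sum_le_sum fun j _ => ?_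
        push_cast
        gcongr
        nlinarith

/-- Lower bound `S ≫ log² J`. Grouping by radical, `S` dominates `∑ twinF(m)` over `m ≤ z` coprime
to `M`, and this dominates the square of the harmonic sum over `a ≡ 1 mod M`, `a ≤ MJ`; such `a`
are automatically coprime to `M`, hence odd. -/
lemma selbergSum_ge (s : BoundingSieve) (hs : s.nu = twinNu) {M J : ℕ} (hM : 0 < M) (hM2 : 2 ∣ M)
    (hP : ∀ l, Squarefree l → l.Coprime M → l ≤ (M * J) ^ 2 → l ∣ s.prodPrimes)
    (hPM : s.prodPrimes.Coprime M) :
    (Real.log (J + 1) / M) ^ 2 ≤ selbergSum s ((M * J) ^ 2) := by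
  have hoddM : ∀ a : ℕ, a.Coprime M → Odd a := fun a ha =>
    Nat.coprime_two_right.1 (ha.coprime_dvd_right hM2)
  set z := (M * J) ^ 2 with hz
  set A := (range J).image (fun j => 1 + M * j) with hA
  have hAc : ∀ a ∈ A, a.Coprime M ∧ a ≤ M * J := by
    intro a ha
    obtain ⟨j, hj, rfl⟩ := mem_image.1 ha
    refine ⟨by simp, ?_⟩
    have : j + 1 ≤ J := mem_range.1 hj
    nlinarith
  set B := {m ∈ Icc 1 z | m.Coprime M} with hBdef
  have hB : ∀ a ∈ A, ∀ b ∈ A, a * b ∈ B := by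
    intro a ha b hb
    obtain ⟨h1, h2⟩ := hAc a ha
    obtain ⟨h3, h4⟩ := hAc b hb
    refine mem_filter.2 ⟨mem_Icc.2 ⟨?_, ?_⟩, h1.mul_left h3⟩
    · exact Nat.mul_pos (hoddM a h1).pos (hoddM b h3).pos
    · rw [hz, sq]; exact Nat.mul_le_mul h2 h4
  have h1 := sum_inv_sq_le_sum_twinF A B (fun a ha => hoddM a (hAc a ha).1) hB
  have h2 : Real.log (J + 1) / M ≤ ∑ a ∈ A, (1 : ℝ) / a := log_le_sum_inv hM
  have h3 : ∑ m ∈ B, twinF m ≤ selbergSum s z := by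
    have hmaps : ∀ m ∈ B, ∏ p ∈ m.primeFactors, p ∈ {l ∈ s.prodPrimes.divisors | l ≤ z} := by
      intro m hm
      obtain ⟨hm1, hm2⟩ := mem_filter.1 hm
      obtain ⟨hm1, hm3⟩ := mem_Icc.1 hm1
      have hd := Nat.prod_primeFactors_dvd m
      have hle := (Nat.le_of_dvd hm1 hd).trans hm3
      refine mem_filter.2 ⟨mem_divisors.2 ⟨hP _ ?_ (hm2.coprime_dvd_left hd) hle,
        prodPrimes_ne_zero⟩, hle⟩
      refine Finset.squarefree_prod_of_pairwise_isCoprime ?_ ?_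
      · intro p hp q hq hpq
        exact Nat.coprime_iff_isRelPrime.1 ((Nat.coprime_primes (prime_of_mem_primeFactors hp)
          (prime_of_mem_primeFactors hq)).2 hpq)
      · exact fun p hp => (prime_of_mem_primeFactors hp).squarefree
    rw [← sum_fiberwise_of_maps_to hmaps, selbergSum]
    refine sum_le_sum fun l hl => ?_
    have hlP := dvd_of_mem_divisors (mem_filter.1 hl).1
    rw [selbergTerms_eq_twinF s hs (squarefree_of_dvd_prodPrimes hlP)
      (hoddM l (hPM.coprime_dvd_left hlP))]
    refine sum_twinF_fiber_le _ fun m hm => ?_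
    obtain ⟨ha, hb⟩ := mem_filter.1 hm
    have := (mem_Icc.1 (mem_filter.1 ha).1).1
    exact ⟨by omega, hb⟩
  have h4 : 0 ≤ Real.log (J + 1) / M := by
    have : 0 ≤ Real.log ((J : ℝ) + 1) := Real.log_nonneg (by linarith [Nat.cast_nonneg (α := ℝ) J])
    positivity
  calc _ ≤ (∑ a ∈ A, (1 : ℝ) / a) ^ 2 := by gcongr
    _ ≤ _ := h1.trans h3

/-! ### Equidistribution of the roots of `x (x + k)` -/

/-- The number of roots of `x (x + k)` in `ZMod d`. -/
noncomputable def rootCount (k d : ℕ) : ℕ := Nat.card {a : ZMod d // a * (a + k) = 0}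

lemma rootCount_mul (k : ℕ) {m n : ℕ} (h : m.Coprime n) :
    rootCount k (m * n) = rootCount k m * rootCount k n := by
  unfold rootCount
  rw [← Nat.card_prod]
  refine Nat.card_congr ?_
  refine Equiv.trans ((ZMod.chineseRemainder h).toEquiv.subtypeEquiv
    (q := fun x : ZMod m × ZMod n => x.1 * (x.1 + k) = 0 ∧ x.2 * (x.2 + k) = 0) ?_)
    (Equiv.subtypeProdEquivProd (p := fun a : ZMod m => a * (a + k) = 0)
      (q := fun a : ZMod n => a * (a + k) = 0))
  intro a
  have := map_eq_zero_iff (ZMod.chineseRemainder h) (ZMod.chineseRemainder h).injective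
    (x := a * (a + k))
  rw [← this, map_mul, map_add, map_natCast, Prod.ext_iff]
  rfl

lemma rootCount_prime {k p : ℕ} (hp : p.Prime) (hk : ¬ p ∣ k) : rootCount k p = 2 := by
  have := Fact.mk hp
  have hk0 : (k : ZMod p) ≠ 0 := by rwa [ne_eq, ZMod.natCast_eq_zero_iff]
  unfold rootCount
  have : {a : ZMod p | a * (a + k) = 0} = {0, -(k : ZMod p)} := by
    ext a
    simp [add_eq_zero_iff_eq_neg]
  change Nat.card ↥{a : ZMod p | a * (a + k) = 0} = 2
  rw [this, Nat.card_coe_set_eq, Set.ncard_pair]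
  simpa using hk0

lemma rootCount_eq {k d : ℕ} (hd : Squarefree d) (hk : d.Coprime k) :
    rootCount k d = 2 ^ ω d := by
  induction d using Nat.recOnPosPrimePosCoprime with
  | zero => simp at hd
  | one =>
    simp only [cardDistinctFactors_one, pow_zero]
    unfold rootCount
    have : Nat.card {a : ZMod 1 // a * (a + k) = 0} = Nat.card (Unit) := by
      refine Nat.card_congr ⟨fun _ => (), fun _ => ⟨0, Subsingleton.elim _ _⟩, ?_, ?_⟩
      · intro x; exact Subsingleton.elim _ _
      · intro x; rfl
    simpa using this
  | prime_pow p n hp hn =>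
    have hn1 : n = 1 := by
      by_contra h
      have := (Nat.squarefree_pow_iff hp.ne_one hn.ne').1 hd
      exact h this.2
    subst hn1
    rw [pow_one] at hk ⊢
    rw [rootCount_prime hp ((hp.coprime_iff_not_dvd).1 hk), cardDistinctFactors_apply_prime hp,
      pow_one]
  | coprime a b ha hb hab iha ihb =>
    rw [rootCount_mul k hab, iha (hd.squarefree_of_dvd (dvd_mul_right a b)) (hk.coprime_dvd_left (dvd_mul_right a b)),
      ihb (hd.squarefree_of_dvd (dvd_mul_left b a)) (hk.coprime_dvd_left (dvd_mul_left b a)), cardDistinctFactors_mul hab, pow_add]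

lemma rootCount_eq_count (k : ℕ) {d : ℕ} (hd : 0 < d) :
    Nat.count (fun n => d ∣ n * (n + k)) d = rootCount k d := by
  have : NeZero d := ⟨hd.ne'⟩
  rw [count_eq_card_filter_range, rootCount, Nat.card_eq_fintype_card, Fintype.card_subtype]
  refine card_bij (fun n _ => (n : ZMod d)) ?_ ?_ ?_
  · intro n hn
    have := (mem_filter.1 hn).2
    rw [← ZMod.natCast_eq_zero_iff] at this
    simpa using this
  · intro a ha b hb h
    have ha' := mem_range.1 (mem_filter.1 ha).1
    have hb' := mem_range.1 (mem_filter.1 hb).1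
    have := congrArg ZMod.val h
    rwa [ZMod.val_cast_of_lt ha', ZMod.val_cast_of_lt hb'] at this
  · intro a ha
    refine ⟨a.val, ?_, by simp⟩
    rw [mem_filter, mem_range, ← ZMod.natCast_eq_zero_iff]
    refine ⟨ZMod.val_lt a, ?_⟩
    simpa using ha

/-- Counting by full periods modulo `d`, each containing `2^ω(d)` solutions, leaves an error less
than `d`. -/
lemma abs_count_sub_le (k : ℕ) {d : ℕ} (N : ℕ) (hd : Squarefree d) (hk : d.Coprime k) :
    |(Nat.count (fun n => d ∣ n * (n + k)) N : ℝ) - 2 ^ ω d / d * N| ≤ d := by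
  have hd0 : 0 < d := Nat.pos_of_ne_zero hd.ne_zero
  have hper : ∀ q r : ℕ, Nat.count (fun n => d ∣ n * (n + k)) (q * d + r)
      = q * rootCount k d + Nat.count (fun n => d ∣ n * (n + k)) r := by
    intro q r
    induction q with
    | zero => simp
    | succ q ih =>
      have h1 : (q + 1) * d + r = d + (q * d + r) := by ring
      rw [h1, Nat.count_add, rootCount_eq_count k hd0]
      have h2 : (fun n => d ∣ (d + n) * (d + n + k)) = fun n => d ∣ n * (n + k) := by
        funext n
        have : (d + n) * (d + n + k) = d * (d + n + k + n) + n * (n + k) := by ring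
        rw [this]
        exact propext (Nat.dvd_add_right (dvd_mul_right d _))
      simp only [h2, ih]
      ring
  have hρ := rootCount_eq hd hk
  have hρd : rootCount k d ≤ d := by
    rw [← rootCount_eq_count k hd0]; exact Nat.count_le _
  have hN : N / d * d + N % d = N := Nat.div_add_mod' N d
  have hr : N % d < d := Nat.mod_lt _ hd0
  have hc := hper (N / d) (N % d)
  rw [hN] at hc
  have hcr : Nat.count (fun n => d ∣ n * (n + k)) (N % d) ≤ N % d := Nat.count_le _
  set c := Nat.count (fun n => d ∣ n * (n + k)) (N % d)
  set q := N / d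
  set r := N % d
  have hdR : (0 : ℝ) < d := by exact_mod_cast hd0
  have hρ' : (2 : ℝ) ^ ω d = rootCount k d := by rw [hρ]; push_cast; rfl
  have hNR : (N : ℝ) = q * d + r := by rw [← hN]; push_cast; rfl
  rw [hc, hρ', hNR]
  have hρR : (rootCount k d : ℝ) ≤ d := by exact_mod_cast hρd
  have hrR : (r : ℝ) ≤ d := by exact_mod_cast hr.le
  have hcR : (c : ℝ) ≤ r := by exact_mod_cast hcr
  have e : ((q * rootCount k d + c : ℕ) : ℝ) - rootCount k d / d * (q * d + r)
      = c - rootCount k d / d * r := by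
    push_cast; field_simp; ring
  rw [e]
  have h1 : (rootCount k d : ℝ) / d * r ≤ r := by
    have : (rootCount k d : ℝ) / d ≤ 1 := (div_le_one hdR).2 hρR
    exact mul_le_of_le_one_left (by positivity) this
  have h2 : 0 ≤ (rootCount k d : ℝ) / d * r := by positivity
  rw [abs_le]
  constructor
  · have : (0 : ℝ) ≤ c := by positivity
    linarith
  · linarith

/-! ### Upper bound for prime pairs -/

/-- The product of the primes `p ≤ z` with `p ∤ 2k`. Excluding `p ∣ k` makes the two residue classes
`0` and `-k` distinct; excluding `2` keeps `ν(p) = 2/p` below `1`. -/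
def siftPrimes (k z : ℕ) : ℕ := ∏ p ∈ range (z + 1) with p.Prime ∧ ¬ p ∣ 2 * k, p

lemma siftPrimes_squarefree (k z : ℕ) : Squarefree (siftPrimes k z) := by
  refine Finset.squarefree_prod_of_pairwise_isCoprime ?_ ?_
  · intro p hp q hq hpq
    exact Nat.coprime_iff_isRelPrime.1 ((Nat.coprime_primes (mem_filter.1 hp).2.1
      (mem_filter.1 hq).2.1).2 hpq)
  · exact fun p hp => (mem_filter.1 hp).2.1.squarefree

lemma prime_dvd_siftPrimes {k z p : ℕ} (hp : p.Prime) :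
    p ∣ siftPrimes k z ↔ p ≤ z ∧ ¬ p ∣ 2 * k := by
  unfold siftPrimes
  rw [hp.prime.dvd_finsetProd_iff]
  constructor
  · rintro ⟨q, hq, hpq⟩
    obtain ⟨h1, h2, h3⟩ := mem_filter.1 hq
    obtain rfl := (Nat.prime_dvd_prime_iff_eq hp h2).1 hpq
    exact ⟨by have := mem_range.1 h1; omega, h3⟩
  · rintro ⟨h1, h2⟩
    exact ⟨p, mem_filter.2 ⟨mem_range.2 (by omega), hp, h2⟩, dvd_rfl⟩

lemma siftPrimes_coprime (k z : ℕ) : (siftPrimes k z).Coprime (2 * k) :=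
  Nat.coprime_of_dvd fun _ hp h1 h2 => ((prime_dvd_siftPrimes hp).1 h1).2 h2

lemma dvd_siftPrimes {k z l : ℕ} (hl : Squarefree l) (hk : l.Coprime (2 * k)) (hz : l ≤ z) :
    l ∣ siftPrimes k z := by
  rw [← Nat.prod_primeFactors_of_squarefree hl]
  refine prod_dvd_prod_of_subset _ _ _ fun p hp => ?_
  have hpp := prime_of_mem_primeFactors hp
  have hd := dvd_of_mem_primeFactors hp
  have := Nat.le_of_dvd (Nat.pos_of_ne_zero hl.ne_zero) hd
  exact mem_filter.2 ⟨mem_range.2 (by omega), hpp,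
    (hpp.coprime_iff_not_dvd).1 (hk.coprime_dvd_left hd)⟩

/-- The sieve problem for the values `n (n + k)`, `n < N`, with unit weights. Indexing the support
by the values is harmless since `n ↦ n (n + k)` is injective. -/
noncomputable def twinSieve (k z N : ℕ) : BoundingSieve where
  support := (range N).image fun n => n * (n + k)
  prodPrimes := siftPrimes k z
  prodPrimes_squarefree := siftPrimes_squarefree k z
  weights := fun _ => 1
  weights_nonneg := fun _ => zero_le_one
  totalMass := N
  nu := twinNu
  nu_mult := twinNu_isMultiplicative
  nu_pos_of_prime := fun p hp _ => by
    have := hp.pos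
    rw [twinNu_apply]; positivity
  nu_lt_one_of_prime := fun p hp hd => by
    have h2 := ((prime_dvd_siftPrimes hp).1 hd).2
    have h3 : p ≠ 2 := by rintro rfl; exact h2 (dvd_mul_right 2 k)
    have := hp.two_le
    rw [twinNu_apply, cardDistinctFactors_apply_prime hp, pow_one,
      div_lt_one (by exact_mod_cast hp.pos)]
    exact_mod_cast (by omega : 2 < p)

lemma mul_add_injective (k : ℕ) : Function.Injective fun n : ℕ => n * (n + k) := by
  have : StrictMono fun n : ℕ => n * (n + k) := by
    intro a b hab
    exact Nat.mul_lt_mul_of_lt_of_le hab (by omega) (by omega)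
  exact this.injective

lemma twinSieve_siftedSum (k z N : ℕ) : (twinSieve k z N).siftedSum =
    #{n ∈ range N | (siftPrimes k z).Coprime (n * (n + k))} := by
  rw [siftedSum]
  simp only [twinSieve]
  rw [sum_image (fun a _ b _ h => mul_add_injective k h), card_filter]
  push_cast
  rfl

lemma twinSieve_rem (k z N d : ℕ) : (twinSieve k z N).rem d =
    (Nat.count (fun n => d ∣ n * (n + k)) N : ℝ) - 2 ^ ω d / d * N := by
  rw [rem, multSum]
  simp only [twinSieve]
  rw [sum_image (fun a _ b _ h => mul_add_injective k h), count_eq_card_filter_range, card_filter,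
    twinNu_apply]
  push_cast
  rfl

/-- The upper bound sieve for prime pairs with gap `k`. The second term absorbs both the sieve
error `z⁸` and the at most `z` primes `p ≤ z`, where `z = (2kJ)²`. -/
lemma card_prime_pairs_le {k : ℕ} (hk : 0 < k) (N : ℕ) {J : ℕ} (hJ : 1 ≤ J) :
    (#{p ∈ range N | p.Prime ∧ (p + k).Prime} : ℝ) ≤
      (2 * k : ℝ) ^ 2 * N / Real.log (J + 1) ^ 2 + 2 * (2 * k * J : ℝ) ^ 16 := by
  set z := (2 * k * J) ^ 2 with hz
  have hz1 : 1 ≤ z := Nat.one_le_pow _ _ (by positivity)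
  have hlog : 0 < Real.log ((J : ℝ) + 1) := by
    have : (1 : ℝ) ≤ J := by exact_mod_cast hJ
    exact Real.log_pos (by linarith)
  have hkR : (0 : ℝ) < k := by exact_mod_cast hk
  have hS := selbergSum_ge (twinSieve k z N) rfl (M := 2 * k) (J := J) (by omega)
    (dvd_mul_right 2 k) (fun l h1 h2 h3 => dvd_siftPrimes h1 h2 h3) (siftPrimes_coprime k z)
  rw [← hz] at hS
  have hsel := siftedSum_le_selberg (twinSieve k z N) hz1 (by
    intro d hd
    change _ ≤ twinNu d
    rw [twinNu_apply]
    gcongr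
    exact one_le_pow₀ (by norm_num)) (by
    intro d hd
    rw [twinSieve_rem]
    have hsq := (siftPrimes_squarefree k z).squarefree_of_dvd hd
    exact abs_count_sub_le k N hsq
      (((siftPrimes_coprime k z).coprime_dvd_left hd).coprime_dvd_right (dvd_mul_left k 2)))
  rw [twinSieve_siftedSum] at hsel
  have hmass : (twinSieve k z N).totalMass = N := rfl
  rw [hmass] at hsel
  have hcard : #{p ∈ range N | p.Prime ∧ (p + k).Prime} ≤
      #{n ∈ range N | (siftPrimes k z).Coprime (n * (n + k))} + z := by
    calc _ ≤ #({n ∈ range N | (siftPrimes k z).Coprime (n * (n + k))} ∪ Icc 1 z) := by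
          refine card_le_card fun p hp => ?_
          obtain ⟨h1, h2, h3⟩ := mem_filter.1 hp
          rw [mem_union]
          -- A prime `p > z` survives: neither `p` nor `p + k` has a prime factor `≤ z`.
          by_cases hpz : p ≤ z
          · right; exact mem_Icc.2 ⟨h2.pos, hpz⟩
          · left
            refine mem_filter.2 ⟨h1, Nat.coprime_of_dvd fun q hq hq1 hq2 => ?_⟩
            have hqz := ((prime_dvd_siftPrimes hq).1 hq1).1
            rcases (hq.dvd_mul).1 hq2 with h | h
            · have := (Nat.prime_dvd_prime_iff_eq hq h2).1 h
              omega
            · have := (Nat.prime_dvd_prime_iff_eq hq h3).1 h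
              omega
      _ ≤ _ := (card_union_le _ _).trans (by simp)
  have hzR : (1 : ℝ) ≤ z := by exact_mod_cast hz1
  have hz8 : (z : ℝ) ≤ (z : ℝ) ^ 8 := le_self_pow₀ hzR (by norm_num)
  have hz16 : (z : ℝ) ^ 8 = (2 * k * J : ℝ) ^ 16 := by rw [hz]; push_cast; ring
  have hmain : (N : ℝ) / selbergSum (twinSieve k z N) z ≤
      (2 * k : ℝ) ^ 2 * N / Real.log (J + 1) ^ 2 := by
    calc (N : ℝ) / selbergSum (twinSieve k z N) z
        ≤ N / (Real.log (J + 1) / (2 * k : ℕ)) ^ 2 := by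
          gcongr
      _ = _ := by push_cast; field_simp
  have hcard' : (#{p ∈ range N | p.Prime ∧ (p + k).Prime} : ℝ) ≤
      #{n ∈ range N | (siftPrimes k z).Coprime (n * (n + k))} + z := by exact_mod_cast hcard
  linarith

/-! ### Missed values and prime gaps -/

open Classical in
/-- If `m` is not of the form `π(kn)`, then no multiple of `n` lies between the `m`-th prime `p`
(inclusive) and its successor `q` (exclusive), which forces `q - p ≤ n`. So the missed values
inject into the prime pairs `p, p + d` with `1 ≤ d ≤ n`. -/
lemma card_missed_le {n : ℕ} (hn : 0 < n) (N : ℕ) :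
    #{m ∈ Icc 1 (primeCounting' N) | ¬ ∃ k, 0 < k ∧ primeCounting (k * n) = m} ≤
      ∑ d ∈ Icc 1 n, #{p ∈ range N | p.Prime ∧ (p + d).Prime} := by
  refine le_trans ?_ card_biUnion_le
  refine card_le_card_of_injOn (fun m => nth Nat.Prime (m - 1)) ?_ ?_
  · intro m hm
    obtain ⟨h1, h2⟩ := mem_filter.1 hm
    obtain ⟨h1, h3⟩ := mem_Icc.1 h1
    dsimp only
    set p := nth Nat.Prime (m - 1) with hp
    have hpp : p.Prime := prime_nth_prime _
    have hpN : p < N := nth_lt_of_lt_count (p := Nat.Prime) (by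
      change m - 1 < primeCounting' N; omega)
    have hpc : primeCounting p = m := by
      have h : primeCounting' p = m - 1 := primeCounting'_nth_eq _
      rw [primeCounting_eq_primeCounting'_succ]
      unfold primeCounting' at h ⊢
      rw [Nat.count_succ, if_pos hpp, h]
      omega
    -- `t * n` is the first multiple of `n` beyond `p`; as `m` is missed, `π(t * n) > m`.
    set t := p / n + 1
    have ht1 : p < t * n := Nat.lt_mul_of_div_lt (Nat.lt_succ_self _) hn
    have ht2 : t * n ≤ p + n := by
      have := Nat.div_mul_le_self p n
      have : t * n = p / n * n + n := by ring
      omega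
    have hmon := monotone_primeCounting ht1.le
    have hne : primeCounting (t * n) ≠ m := fun h => h2 ⟨t, Nat.succ_pos _, h⟩
    -- `nth` counts from `0`, so this is the prime following `p`.
    set q := nth Nat.Prime m with hq
    have hqp : q.Prime := prime_nth_prime _
    have hqt : q < t * n + 1 := nth_lt_of_lt_count (p := Nat.Prime) (by
      change m < primeCounting (t * n); omega)
    have hpq : p < q := nth_strictMono infinite_setOfPred_prime (by omega)
    simp only [coe_biUnion, Set.mem_iUnion, mem_coe]
    refine ⟨q - p, mem_Icc.2 ⟨by omega, by omega⟩, mem_filter.2 ⟨mem_range.2 hpN, hpp, ?_⟩⟩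
    rwa [Nat.add_sub_cancel' hpq.le]
  · intro a ha b hb h
    have ha' := (mem_Icc.1 (mem_filter.1 ha).1).1
    have hb' := (mem_Icc.1 (mem_filter.1 hb).1).1
    have := (nth_strictMono infinite_setOfPred_prime).injective h
    omega

/-! ### Many products of two primes -/

/-- Chebyshev's lower bound, with the constant weakened from `log 2` to `1/4` so that any additive
constant `B` can be absorbed. -/
lemma eventually_primeCounting_ge (B : ℝ) :
    ∀ᶠ y : ℝ in atTop, y / (4 * Real.log y) + B ≤ primeCounting ⌊y⌋₊ := by
  have hc : (0 : ℝ) < 1 / (10 * (2 + |B|)) := by positivity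
  filter_upwards [Real.isLittleO_log_id_atTop.bound hc, eventually_ge_atTop (4 : ℝ)] with y hy hy4
  have hlog : 0 < Real.log y := Real.log_pos (by linarith)
  rw [Real.norm_of_nonneg hlog.le, id, Real.norm_of_nonneg (by linarith)] at hy
  have hy' : (2 + |B|) * Real.log y ≤ y / 10 := by
    calc _ ≤ (2 + |B|) * (1 / (10 * (2 + |B|)) * y) := by gcongr
      _ = _ := by field_simp
  refine le_trans ?_ (Chebyshev.pi_ge' (x := y) (by linarith))
  rw [le_div_iff₀ hlog]
  have e : (y / (4 * Real.log y) + B) * Real.log y = y / 4 + B * Real.log y := by field_simp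
  rw [e]
  have h1 : B * Real.log y ≤ |B| * Real.log y := by gcongr; exact le_abs_self B
  have h2 : Real.log (y + 2) ≤ 2 * Real.log y := by
    rw [← Real.log_rpow (by linarith)]
    apply Real.log_le_log (by linarith)
    norm_num
    nlinarith
  have h3 := Real.log_two_gt_d9
  nlinarith

lemma exists_sum_prime_inv_ge (T : ℝ) :
    ∃ B : ℕ, T ≤ ∑ p ∈ range B with p.Prime, (1 : ℝ) / p := by
  have h := (not_summable_iff_tendsto_nat_atTop_of_nonneg (fun n => by
    refine Set.indicator_nonneg (fun p _ => ?_) n; positivity)).1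
    not_summable_one_div_on_primes
  obtain ⟨B, hB⟩ := (h.eventually_ge_atTop T).exists
  refine ⟨B, hB.trans (le_of_eq ?_)⟩
  rw [sum_filter]
  refine sum_congr rfl fun p _ => ?_
  simp [Set.indicator_apply]

/-- The `P_2`-numbers outnumber the primes by more than any constant factor: the products `pq` with
`p < B ≤ q` are distinct, and for fixed `p` there are `≫ (1/p) X / log X` of them, while
`∑_{p < B} 1/p` is unbounded in `B`. -/
lemma eventually_card_P2_ge (T : ℝ) : ∀ᶠ X : ℕ in atTop,
    T * X / Real.log X ≤ #{m ∈ Icc 1 X | m.primeFactorsList.length ≤ 2} := by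
  obtain ⟨B, hB⟩ := exists_sum_prime_inv_ge (4 * T)
  set Q := {p ∈ range B | p.Prime} with hQ
  have hev : ∀ᶠ X : ℕ in atTop, ∀ p ∈ Q, ((X : ℝ) / p) / (4 * Real.log (X / p)) + B ≤
      primeCounting ⌊(X : ℝ) / p⌋₊ := by
    rw [eventually_all_finset]
    intro p hp
    have hp0 : (0 : ℝ) < p := by exact_mod_cast (mem_filter.1 hp).2.pos
    exact (tendsto_natCast_atTop_atTop.atTop_div_const hp0).eventually
      (eventually_primeCounting_ge B)
  have hev2 : ∀ᶠ X : ℕ in atTop, B ^ 2 + 2 ≤ X := eventually_ge_atTop _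
  filter_upwards [hev, hev2] with X hX hXB
  have hlogX : 0 < Real.log X := Real.log_pos (by exact_mod_cast (by nlinarith : 1 < X))
  let R : ℕ → Finset ℕ := fun p => {q ∈ range (X / p + 1) | q.Prime ∧ B ≤ q}
  have hR : ∀ p ∈ Q, (1 : ℝ) / p * (X / (4 * Real.log X)) ≤ #(R p) := by
    intro p hp
    obtain ⟨hpB, hpp⟩ := mem_filter.1 hp
    have hpB' := mem_range.1 hpB
    have hp0 : (0 : ℝ) < p := by exact_mod_cast hpp.pos
    have h1 := hX p hp
    have h2 : primeCounting ⌊(X : ℝ) / p⌋₊ ≤ #(R p) + B := by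
      rw [Nat.floor_div_eq_div, ← primesLE_card_eq_primeCounting]
      calc _ ≤ #(R p ∪ range B) := by
            refine card_le_card fun q hq => ?_
            obtain ⟨h3, h4⟩ := mem_primesLE.1 hq
            rw [mem_union]
            by_cases h5 : B ≤ q
            · left; exact mem_filter.2 ⟨mem_range.2 (by omega), h4, h5⟩
            · right; exact mem_range.2 (by omega)
        _ ≤ _ := (card_union_le _ _).trans (by simp)
    have h2' : (primeCounting ⌊(X : ℝ) / p⌋₊ : ℝ) ≤ #(R p) + B := by exact_mod_cast h2
    have hXp : (1 : ℝ) < X / p := by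
      rw [lt_div_iff₀ hp0, one_mul]
      exact_mod_cast (by nlinarith : p < X)
    have hlogp : 0 < Real.log (X / p) := Real.log_pos hXp
    have h3 : Real.log (X / p) ≤ Real.log X := by
      apply Real.log_le_log (by linarith)
      exact div_le_self (by positivity) (by exact_mod_cast hpp.one_le)
    have h4 : (1 : ℝ) / p * (X / (4 * Real.log X)) ≤ ((X : ℝ) / p) / (4 * Real.log (X / p)) := by
      calc _ = ((X : ℝ) / p) / (4 * Real.log X) := by field_simp
        _ ≤ _ := by gcongr
    linarith
  have hcard : ∑ p ∈ Q, #(R p) ≤ #{m ∈ Icc 1 X | m.primeFactorsList.length ≤ 2} := by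
    rw [← card_sigma]
    refine card_le_card_of_injOn (fun x => x.1 * x.2) ?_ ?_
    · rintro ⟨p, q⟩ hx
      obtain ⟨hp, hq⟩ := mem_sigma.1 hx
      obtain ⟨h1, h2⟩ := mem_filter.1 hp
      obtain ⟨h3, h4, h5⟩ := mem_filter.1 hq
      dsimp only at *
      have h6 : q ≤ X / p := by have := mem_range.1 h3; omega
      have h7 := (Nat.le_div_iff_mul_le h2.pos).1 h6
      refine mem_filter.2 ⟨mem_Icc.2 ⟨Nat.mul_pos h2.pos h4.pos, by rw [mul_comm]; exact h7⟩, ?_⟩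
      rw [← cardFactors_apply, cardFactors_mul h2.ne_zero h4.ne_zero,
        cardFactors_apply_prime h2, cardFactors_apply_prime h4]
    · rintro ⟨p, q⟩ hx ⟨p', q'⟩ hx' h
      obtain ⟨hp, hq⟩ := mem_sigma.1 hx
      obtain ⟨h1, h2⟩ := mem_filter.1 hp
      obtain ⟨h3, h4, h5⟩ := mem_filter.1 hq
      obtain ⟨hp', hq'⟩ := mem_sigma.1 hx'
      obtain ⟨h1', h2'⟩ := mem_filter.1 hp'
      obtain ⟨h3', h4', h5'⟩ := mem_filter.1 hq'
      dsimp only at *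
      have hpB := mem_range.1 h1
      have hd : p ∣ p' * q' := h ▸ dvd_mul_right p q
      have hpp : p = p' := by
        rcases (h2.dvd_mul).1 hd with hd | hd
        · exact (Nat.prime_dvd_prime_iff_eq h2 h2').1 hd
        · have := (Nat.prime_dvd_prime_iff_eq h2 h4').1 hd
          omega
      subst hpp
      have := Nat.eq_of_mul_eq_mul_left h2.pos h
      subst this
      rfl
  calc T * X / Real.log X = (4 * T) * (X / (4 * Real.log X)) := by field_simp
    _ ≤ (∑ p ∈ Q, (1 : ℝ) / p) * (X / (4 * Real.log X)) := by gcongr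
    _ ≤ ∑ p ∈ Q, (#(R p) : ℝ) := by rw [sum_mul]; exact sum_le_sum hR
    _ ≤ _ := by exact_mod_cast hcard

/-! ### Comparison of the two counts -/

/-- Otherwise all but finitely many `P_2`-numbers up to `π(J³²)` are missed values. There are
`O(J³² / log² J)` missed values, against more than any constant times `J³² / log² J`
`P_2`-numbers. -/
theorem infinite_P2_values (n : ℕ) (hn : 0 < n) :
    {a : ℕ | (∃ k : ℕ, 0 < k ∧ Nat.primeCounting (k * n) = a) ∧
      0 < a ∧ a.primeFactorsList.length ≤ 2}.Infinite := by
  classical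
  intro hfin
  obtain ⟨m₀, hm₀⟩ := hfin.bddAbove
  set C : ℝ := n * ((2 * n : ℝ) ^ 2 * 2 + 2 * (2 * n : ℝ) ^ 16) + m₀ with hC
  have hC0 : 0 ≤ C := by positivity
  have hpow : Tendsto (fun J : ℕ => J ^ 32) atTop atTop := tendsto_pow_atTop (by norm_num)
  have hX : Tendsto (fun J : ℕ => primeCounting (J ^ 32)) atTop atTop :=
    tendsto_primeCounting.comp hpow
  have hpi := (tendsto_natCast_atTop_atTop (R := ℝ)).comp hpow |>.eventually
    (eventually_primeCounting_ge 0)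
  -- Any factor above `4 * 32 * 33 = 4224` would do: `4` is the Chebyshev constant, `32` and `33`
  -- come from `log (J ^ 32)` and `log X ≤ log (J ^ 33)`.
  -- The exponent `32` makes the sieve error `J ^ 16` negligible.
  obtain ⟨J, hP2, hpi, hJ⟩ := ((hX.eventually (eventually_card_P2_ge (5000 * (C + 1)))).and
    (hpi.and (eventually_ge_atTop 3))).exists
  set X := primeCounting (J ^ 32) with hXdef
  set L := Real.log J with hL
  have hJR : (3 : ℝ) ≤ J := by exact_mod_cast hJ
  have hL0 : 0 < L := Real.log_pos (by linarith)
  have hLJ : L ≤ J := (Real.log_le_sub_one_of_pos (by linarith)).trans (by linarith)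
  have hXlow : (J : ℝ) ^ 32 / (128 * L) ≤ X := by
    simp only [Function.comp_apply, Nat.floor_natCast, add_zero] at hpi
    push_cast at hpi
    rw [Real.log_pow, ← hL] at hpi
    refine le_trans (le_of_eq ?_) hpi
    push_cast
    ring
  have hXup : X ≤ J ^ 33 := by
    have h1 : X ≤ J ^ 32 + 1 := Nat.count_le _
    have h2 : 1 ≤ J ^ 32 := Nat.one_le_pow _ _ (by omega)
    have h3 : J ^ 33 = J ^ 32 * J := pow_succ _ _
    nlinarith
  have hX1 : (1 : ℝ) < X := by
    have : 2 ≤ X := by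
      have : primeCounting 3 ≤ X := monotone_primeCounting
        (hJ.trans (Nat.le_self_pow (by norm_num) J))
      have h3 : primeCounting 3 = 2 := by decide
      omega
    exact_mod_cast this
  have hlogX : Real.log X ≤ 33 * L := by
    calc Real.log X ≤ Real.log ((J : ℝ) ^ 33) :=
          Real.log_le_log (by linarith) (by exact_mod_cast hXup)
      _ = _ := by rw [Real.log_pow]; norm_num [hL]
  have hlogX0 : 0 < Real.log X := Real.log_pos hX1
  have hsplit : #{m ∈ Icc 1 X | m.primeFactorsList.length ≤ 2} ≤
      m₀ + ∑ d ∈ Icc 1 n, #{p ∈ range (J ^ 32 + 1) | p.Prime ∧ (p + d).Prime} := by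
    have h := card_missed_le hn (J ^ 32 + 1)
    refine le_trans ?_ (Nat.add_le_add_left h m₀)
    calc _ ≤ #(Icc 1 m₀ ∪ {m ∈ Icc 1 (primeCounting' (J ^ 32 + 1)) |
          ¬ ∃ k, 0 < k ∧ primeCounting (k * n) = m}) := by
          refine card_le_card fun m hm => ?_
          obtain ⟨h1, h2⟩ := mem_filter.1 hm
          obtain ⟨h1, h3⟩ := mem_Icc.1 h1
          rw [mem_union]
          by_cases h4 : ∃ k, 0 < k ∧ primeCounting (k * n) = m
          · left; exact mem_Icc.2 ⟨h1, hm₀ ⟨h4, h1, h2⟩⟩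
          · right; exact mem_filter.2 ⟨mem_Icc.2 ⟨h1, h3⟩, h4⟩
      _ ≤ _ := (card_union_le _ _).trans (by simp)
  have hsplit' : (#{m ∈ Icc 1 X | m.primeFactorsList.length ≤ 2} : ℝ) ≤
      m₀ + ∑ d ∈ Icc 1 n, (#{p ∈ range (J ^ 32 + 1) | p.Prime ∧ (p + d).Prime} : ℝ) := by
    exact_mod_cast hsplit
  have hJ16 : (J : ℝ) ^ 16 ≤ (J : ℝ) ^ 32 / L ^ 2 := by
    rw [le_div_iff₀ (by positivity)]
    calc (J : ℝ) ^ 16 * L ^ 2 ≤ (J : ℝ) ^ 16 * (J : ℝ) ^ 2 := by gcongr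
      _ ≤ (J : ℝ) ^ 16 * (J : ℝ) ^ 16 := by
        gcongr
        · linarith
        · norm_num
      _ = _ := by ring
  have hpair : ∀ d ∈ Icc 1 n, (#{p ∈ range (J ^ 32 + 1) | p.Prime ∧ (p + d).Prime} : ℝ) ≤
      ((2 * n : ℝ) ^ 2 * 2 + 2 * (2 * n : ℝ) ^ 16) * ((J : ℝ) ^ 32 / L ^ 2) := by
    intro d hd
    obtain ⟨hd1, hdn⟩ := mem_Icc.1 hd
    have hdn' : (d : ℝ) ≤ n := by exact_mod_cast hdn
    refine (card_prime_pairs_le hd1 (J ^ 32 + 1) (J := J) (by omega)).trans ?_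
    have hLL : L ≤ Real.log ((J : ℝ) + 1) := Real.log_le_log (by linarith) (by linarith)
    have hN : ((J ^ 32 + 1 : ℕ) : ℝ) ≤ 2 * (J : ℝ) ^ 32 := by
      have : (1 : ℝ) ≤ (J : ℝ) ^ 32 := one_le_pow₀ (by linarith)
      push_cast; linarith
    calc (2 * d : ℝ) ^ 2 * ((J ^ 32 + 1 : ℕ) : ℝ) / Real.log (J + 1) ^ 2 + 2 * (2 * d * J : ℝ) ^ 16
        ≤ (2 * n : ℝ) ^ 2 * (2 * (J : ℝ) ^ 32) / L ^ 2 + 2 * (2 * n * J : ℝ) ^ 16 := by gcongr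
      _ = (2 * n : ℝ) ^ 2 * 2 * ((J : ℝ) ^ 32 / L ^ 2) + 2 * (2 * n : ℝ) ^ 16 * (J : ℝ) ^ 16 := by
          ring
      _ ≤ (2 * n : ℝ) ^ 2 * 2 * ((J : ℝ) ^ 32 / L ^ 2)
          + 2 * (2 * n : ℝ) ^ 16 * ((J : ℝ) ^ 32 / L ^ 2) := by gcongr
      _ = _ := by ring
  have hbig : (1 : ℝ) ≤ (J : ℝ) ^ 32 / L ^ 2 := (one_le_pow₀ (by linarith)).trans hJ16
  have hupper : (#{m ∈ Icc 1 X | m.primeFactorsList.length ≤ 2} : ℝ) ≤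
      C * ((J : ℝ) ^ 32 / L ^ 2) := by
    have h1 := sum_le_sum hpair
    rw [sum_const, Nat.card_Icc, Nat.add_sub_cancel, nsmul_eq_mul] at h1
    have h2 : (m₀ : ℝ) ≤ m₀ * ((J : ℝ) ^ 32 / L ^ 2) := le_mul_of_one_le_right (by positivity) hbig
    rw [hC, add_mul]
    linarith
  have hlower : 5000 / 4224 * (C + 1) * ((J : ℝ) ^ 32 / L ^ 2) ≤
      5000 * (C + 1) * X / Real.log X := by
    calc _ = 5000 * (C + 1) * ((J : ℝ) ^ 32 / (128 * L)) / (33 * L) := by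
          field_simp; norm_num
      _ ≤ _ := by gcongr
  have := hlower.trans (hP2.trans hupper)
  nlinarith

end

theorem stmt_11 (n : ℕ) (hn : 0 < n) :
    {a : ℕ | (∃ k : ℕ, 0 < k ∧ Nat.primeCounting (k * n) = a) ∧
      0 < a ∧ a.primeFactorsList.length ≤ 2}.Infinite :=
  infinite_P2_values n hn
end

section
/- Assume the Bateman–Horn-type conjecture: V(N) := #{n ≤ N : 4n+1 and 4n+3 are both prime} satisfies V(N) = 4𝔖·N/(log N)²·(1 + o(1)), where 𝔖 = ∏_{p odd prime} (1 − 1/(p−1)²). Then the set A_4 = {π(4k) : k ∈ ℤ⁺} contains infinitely many primes. -/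
/-!
The increment `π(4n+4) - π(4n)` is at most `2` for `n ≥ 1`, with equality exactly when `4n+1` and
`4n+3` are both prime. So `A_4` omits an integer only when it equals `π(4n) + 1` for such an `n`,
and if `A_4` contained no prime beyond `B`, then every prime in `(B, π(4N)]` would be omitted, giving
`π(π(4N)) ≤ V(N) + B + 1` (`primeCounting_le_twin_card`).

The conjectured size of `V(N)` contradicts this as soon as `π(π(4N))` is asymptotically larger than
`𝔖 · 4N / (log N)²`. The prime number theorem is not needed: `𝔖 ≤ (3/4)(15/16) = 45/64` by keeping
the factors `p = 3, 5` (`twinConst_le`), while a Chebyshev bound `π(n) ≥ 0.86 n / log n`, used twice,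
yields the constant `0.86² = 0.7396 > 45/64`. The usual bound with constant `log 2` would be too
weak, so `ψ(n) ≥ 0.86 n` is derived from Chebyshev's integers `(30t)! t! / ((15t)! (10t)! (6t)!)`
(`eventually_psi_ge`).
-/

/-! ### Chebyshev's lower bound with constant `0.86` -/

open Finset ArithmeticFunction in
/-- Legendre's formula in logarithmic form, `log n! = ∑ Λ(k) ⌊n / k⌋`. The terms with `k > n` vanish,
so the range of summation may be any `M ≥ n`; this allows several factorials to share one range. -/
theorem log_factorial_eq_sum (M n : ℕ) (h : n ≤ M) :
    Real.log (n.factorial : ℝ) = ∑ k ∈ Ioc 0 M, vonMangoldt k * ((n / k : ℕ) : ℝ) := by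
  induction n with
  | zero => simp
  | succ n ih =>
    have ih := ih (by omega)
    rw [Nat.factorial_succ, Nat.cast_mul, Real.log_mul (by positivity) (by positivity), ih,
      ← vonMangoldt_sum]
    have hd : (n + 1).divisors = (Ioc 0 M).filter (fun k => k ∣ n + 1) := by
      ext k
      simp only [Nat.mem_divisors, mem_filter, mem_Ioc]
      constructor
      · rintro ⟨h1, _⟩
        exact ⟨⟨Nat.pos_of_dvd_of_pos h1 (by omega), (Nat.le_of_dvd (by omega) h1).trans h⟩, h1⟩
      · rintro ⟨_, h1⟩
        exact ⟨h1, by omega⟩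
    rw [hd, sum_filter, ← sum_add_distrib]
    refine sum_congr rfl fun k _ => ?_
    rw [Nat.succ_div]
    split_ifs <;> push_cast <;> ring

open Finset ArithmeticFunction in
/-- The logarithm of Chebyshev's integer is at most `ψ(30t)`, since
`⌊y⌋ - ⌊y/2⌋ - ⌊y/3⌋ - ⌊y/5⌋ + ⌊y/30⌋ ≤ 1`. -/
theorem chebyshev_ratio_le_psi (t : ℕ) :
    Real.log ((30 * t).factorial : ℝ) + Real.log (t.factorial : ℝ) - Real.log ((15 * t).factorial : ℝ)
      - Real.log ((10 * t).factorial : ℝ) - Real.log ((6 * t).factorial : ℝ) ≤ Chebyshev.psi ((30 * t : ℕ) : ℝ) := by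
  rw [log_factorial_eq_sum (30 * t) (30 * t) le_rfl, log_factorial_eq_sum (30 * t) t (by omega),
    log_factorial_eq_sum (30 * t) (15 * t) (by omega),
    log_factorial_eq_sum (30 * t) (10 * t) (by omega),
    log_factorial_eq_sum (30 * t) (6 * t) (by omega), Chebyshev.psi, Nat.floor_natCast,
    ← sum_add_distrib, ← sum_sub_distrib, ← sum_sub_distrib, ← sum_sub_distrib]
  refine sum_le_sum fun k _ => ?_
  have e (a b : ℕ) (hab : 30 * t = a * b) (ha : 0 < a) : b / k = 30 * t / k / a := by
    rw [Nat.div_div_eq_div_mul, mul_comm k a, hab, Nat.mul_div_mul_left _ _ ha]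
  have h2 := e 2 (15 * t) (by ring) (by norm_num)
  have h3 := e 3 (10 * t) (by ring) (by norm_num)
  have h5 := e 5 (6 * t) (by ring) (by norm_num)
  have h30 := e 30 t (by ring) (by norm_num)
  have key : 30 * t / k + t / k ≤ 15 * t / k + 10 * t / k + 6 * t / k + 1 := by
    rw [h2, h3, h5, h30]; omega
  have key' : ((30 * t / k : ℕ) : ℝ) + ((t / k : ℕ) : ℝ)
      ≤ ((15 * t / k : ℕ) : ℝ) + ((10 * t / k : ℕ) : ℝ) + ((6 * t / k : ℕ) : ℝ) + 1 := by
    exact_mod_cast key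
  have h0 : 0 ≤ vonMangoldt k := vonMangoldt_nonneg
  nlinarith

theorem log_factorial_ge (n : ℕ) (hn : n ≠ 0) :
    n * Real.log n - n ≤ Real.log (n.factorial : ℝ) := by
  have h := Stirling.le_log_factorial_stirling hn
  have h1 : 0 ≤ Real.log n := Real.log_natCast_nonneg n
  have h2 : 0 ≤ Real.log (2 * Real.pi) := Real.log_nonneg (by nlinarith [Real.pi_gt_three])
  linarith

/-- Upper Stirling bound, from the monotonicity of the Stirling sequence starting at `e / √2`. -/
theorem log_factorial_le (n : ℕ) (hn : n ≠ 0) :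
    Real.log (n.factorial : ℝ) ≤ n * Real.log n - n + Real.log n / 2 + 1 := by
  obtain ⟨m, rfl⟩ := Nat.exists_eq_succ_of_ne_zero hn
  have h := Stirling.log_stirlingSeq'_antitone (Nat.zero_le m)
  simp only [Function.comp] at h
  have h1 := Stirling.log_stirlingSeq_formula (Nat.succ m)
  have hpos : ((Nat.succ m : ℕ) : ℝ) ≠ 0 := by positivity
  rw [Real.log_div hpos (Real.exp_pos 1).ne', Real.log_exp,
    Real.log_mul (by norm_num) hpos] at h1
  have h2 : Real.log (Stirling.stirlingSeq (Nat.succ 0)) = 1 - Real.log 2 / 2 := by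
    rw [Nat.succ_eq_add_one, zero_add, Stirling.stirlingSeq_one,
      Real.log_div (Real.exp_pos 1).ne' (by positivity), Real.log_exp,
      Real.log_sqrt (by norm_num)]
  rw [h2, h1] at h
  linarith

/-- `25.99` is just below `(75/2) log 2`, itself a lower bound for
`14 log 2 + 9 log 3 + 5 log 5`. -/
theorem psi_thirty_ge (t : ℕ) (ht : t ≠ 0) :
    25.99 * t - 3 - 3 / 2 * Real.log (30 * t) ≤ Chebyshev.psi ((30 * t : ℕ) : ℝ) := by
  have h := chebyshev_ratio_le_psi t
  have a30 := log_factorial_ge (30 * t) (by omega)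
  have a1 := log_factorial_ge t ht
  have a15 := log_factorial_le (15 * t) (by omega)
  have a10 := log_factorial_le (10 * t) (by omega)
  have a6 := log_factorial_le (6 * t) (by omega)
  have ht' : (t : ℝ) ≠ 0 := by exact_mod_cast ht
  have htp : (0 : ℝ) < t := by positivity
  have e30 : Real.log (30 * t) = Real.log 2 + Real.log 3 + Real.log 5 + Real.log t := by
    rw [← Real.log_mul (by positivity) (by positivity),
      ← Real.log_mul (by positivity) (by positivity),
      ← Real.log_mul (by positivity) (by positivity)]; norm_num
  have e15 : Real.log (15 * t) = Real.log 3 + Real.log 5 + Real.log t := by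
    rw [← Real.log_mul (by positivity) (by positivity),
      ← Real.log_mul (by positivity) (by positivity)]; norm_num
  have e10 : Real.log (10 * t) = Real.log 2 + Real.log 5 + Real.log t := by
    rw [← Real.log_mul (by positivity) (by positivity),
      ← Real.log_mul (by positivity) (by positivity)]; norm_num
  have e6 : Real.log (6 * t) = Real.log 2 + Real.log 3 + Real.log t := by
    rw [← Real.log_mul (by positivity) (by positivity),
      ← Real.log_mul (by positivity) (by positivity)]; norm_num
  push_cast at a30 a15 a10 a6
  rw [e30] at a30 ⊢
  rw [e15] at a15
  rw [e10] at a10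
  rw [e6] at a6
  have l2 := Real.log_two_gt_d9
  have l3 : 3 * Real.log 2 ≤ 2 * Real.log 3 := by
    have : Real.log ((2 : ℝ) ^ 3) ≤ Real.log ((3 : ℝ) ^ 2) :=
      Real.log_le_log (by norm_num) (by norm_num)
    simpa [Real.log_pow] using this
  have l5 : 2 * Real.log 2 ≤ Real.log 5 := by
    have : Real.log ((2 : ℝ) ^ 2) ≤ Real.log 5 :=
      Real.log_le_log (by norm_num) (by norm_num)
    simpa [Real.log_pow] using this
  have main : 25.99 * (t : ℝ) ≤
      t * (14 * Real.log 2 + 9 * Real.log 3 + 5 * Real.log 5) := by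
    rw [mul_comm]
    gcongr
    linarith
  linarith

open Filter in
theorem eventually_psi_ge : ∀ᶠ n : ℕ in atTop, 0.86 * (n : ℝ) ≤ Chebyshev.psi (n : ℝ) := by
  have hlog := (Real.isLittleO_log_id_atTop.comp_tendsto
    tendsto_natCast_atTop_atTop).bound (show (0 : ℝ) < 1 / 1000 by norm_num)
  filter_upwards [hlog, eventually_ge_atTop 30000] with n hn hn2
  simp only [Function.comp, id, Real.norm_eq_abs, Nat.abs_cast] at hn
  have hn := (le_abs_self _).trans hn
  set t := n / 30 with ht
  have h1 : 30 * t ≤ n := by omega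
  have h2 : n ≤ 30 * t + 29 := by omega
  have h := psi_thirty_ge t (by omega)
  have hm : Chebyshev.psi ((30 * t : ℕ) : ℝ) ≤ Chebyshev.psi (n : ℝ) :=
    Chebyshev.psi_mono (by exact_mod_cast h1)
  have h1' : (30 : ℝ) * t ≤ n := by exact_mod_cast h1
  have h2' : (n : ℝ) ≤ 30 * t + 29 := by exact_mod_cast h2
  have hn2' : (30000 : ℝ) ≤ n := by exact_mod_cast hn2
  have hl : Real.log (30 * t) ≤ Real.log n := Real.log_le_log (by linarith) h1'
  linarith

open Filter in
theorem eventually_primeCounting_ge_s16 :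
    ∀ᶠ n : ℕ in atTop, 0.86 * (n : ℝ) ≤ Nat.primeCounting n * Real.log n := by
  filter_upwards [eventually_psi_ge] with n hn
  exact hn.trans (Chebyshev.psi_le_primeCounting_mul_log n)

/-! ### The twin prime constant -/

/-- Truncating the product at `p = 3, 5`. Convergence has to be proved here, because the `tprod` of
a non-multipliable family is `1`. -/
theorem twinConst_le :
    ∏' p : {p : ℕ // Nat.Prime p ∧ p ≠ 2}, (1 - 1 / ((p : ℝ) - 1) ^ 2) ≤ 45 / 64 := by
  set f : {p : ℕ // Nat.Prime p ∧ p ≠ 2} → ℝ := fun p => 1 - 1 / ((p : ℝ) - 1) ^ 2 with hf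
  have hs : Summable (fun p : {p : ℕ // Nat.Prime p ∧ p ≠ 2} => -(1 / ((p : ℝ) - 1) ^ 2)) := by
    apply Summable.neg
    have h0 : Summable (fun n : ℕ => 1 / ((n : ℝ) - 1) ^ 2) := by
      rw [← summable_nat_add_iff 1]
      simp
    exact h0.comp_injective Subtype.val_injective
  have hm : Multipliable f := by
    have := Real.multipliable_one_add_of_summable hs
    simpa [hf, sub_eq_add_neg] using this
  have hge (p) : 0 ≤ f p := by
    have h2 : (2 : ℝ) ≤ (p : ℕ) := by exact_mod_cast p.2.1.two_le
    have : 1 / (((p : ℕ) : ℝ) - 1) ^ 2 ≤ 1 := by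
      rw [div_le_one (by nlinarith)]; nlinarith
    simp only [hf]; linarith
  have hle (p) : f p ≤ 1 := by
    have : 0 ≤ 1 / (((p : ℕ) : ℝ) - 1) ^ 2 := by positivity
    simp only [hf]; linarith
  let a : {p : ℕ // Nat.Prime p ∧ p ≠ 2} := ⟨3, by norm_num⟩
  let b : {p : ℕ // Nat.Prime p ∧ p ≠ 2} := ⟨5, by norm_num⟩
  have hab : a ≠ b := by simp [a, b]
  refine le_of_tendsto hm.hasProd ?_
  filter_upwards [Filter.eventually_ge_atTop ({a, b} : Finset _)] with s hs
  rw [← Finset.prod_sdiff hs, Finset.prod_pair hab]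
  have h1 : ∏ p ∈ s \ {a, b}, f p ≤ 1 := Finset.prod_le_one (fun p _ => hge p) (fun p _ => hle p)
  have h2 : f a * f b = 45 / 64 := by simp [hf, a, b]; norm_num
  rw [h2]
  linarith

/-! ### Primes omitted by `k ↦ π(4k)` -/

theorem primeCounting_succ' (n : ℕ) :
    Nat.primeCounting (n + 1) = Nat.primeCounting n + if Nat.Prime (n + 1) then 1 else 0 := by
  simp [Nat.primeCounting, Nat.primeCounting', Nat.count_succ]

theorem primeCounting_step (n : ℕ) (hn : 1 ≤ n) :
    Nat.primeCounting (4 * (n + 1)) = Nat.primeCounting (4 * n)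
      + (if Nat.Prime (4 * n + 1) then 1 else 0) + (if Nat.Prime (4 * n + 3) then 1 else 0) := by
  have h2 : ¬ Nat.Prime (4 * n + 1 + 1) := fun h => by
    have := (Nat.prime_dvd_prime_iff_eq Nat.prime_two h).mp (by omega)
    omega
  have h4 : ¬ Nat.Prime (4 * n + 3 + 1) := fun h => by
    have := (Nat.prime_dvd_prime_iff_eq Nat.prime_two h).mp (by omega)
    omega
  rw [show 4 * (n + 1) = 4 * n + 3 + 1 by ring, primeCounting_succ', if_neg h4,
    show 4 * n + 3 = 4 * n + 1 + 1 + 1 by ring, primeCounting_succ', primeCounting_succ',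
    if_neg h2, primeCounting_succ']
  ring

/-- If `A_4` contains no prime above `B`, each prime `q ∈ (B, π(4N)]` is jumped over by
`n ↦ π(4n)`, hence equals `π(4n) + 1` for some `n ≤ N` with `4n+1` and `4n+3` both prime. -/
theorem primeCounting_le_twin_card (B : ℕ)
    (hB : ∀ q k : ℕ, Nat.Prime q → 0 < k → Nat.primeCounting (4 * k) = q → q ≤ B) (N : ℕ) :
    Nat.primeCounting (Nat.primeCounting (4 * N)) ≤
      ((Finset.Icc 1 N).filter
        (fun n => Nat.Prime (4 * n + 1) ∧ Nat.Prime (4 * n + 3))).card + (B + 1) := by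
  classical
  set P := Nat.primeCounting (4 * N) with hP
  set V := (Finset.Icc 1 N).filter (fun n => Nat.Prime (4 * n + 1) ∧ Nat.Prime (4 * n + 3)) with hV
  have hsub : Nat.primesLE P ⊆
      V.image (fun n => Nat.primeCounting (4 * n) + 1) ∪ Finset.range (B + 1) := by
    intro q hq
    obtain ⟨hqP, hqp⟩ := Nat.mem_primesLE.mp hq
    rw [Finset.mem_union, Finset.mem_range]
    by_cases hqB : q ≤ B
    · right; omega
    left
    have hex : ∃ m, q ≤ Nat.primeCounting (4 * m) := ⟨N, hqP⟩
    have hm := Nat.find_spec hex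
    have hmN : Nat.find hex ≤ N := Nat.find_min' hex hqP
    have hmin : ∀ m < Nat.find hex, ¬ q ≤ Nat.primeCounting (4 * m) := fun m h =>
      Nat.find_min hex h
    generalize Nat.find hex = m at hm hmN hmin
    obtain _ | n := m
    · have := hqp.two_le
      simp at hm; omega
    have hlt := hmin n (by omega)
    have hne : Nat.primeCounting (4 * (n + 1)) ≠ q := fun h => hqB (hB q (n + 1) hqp (by omega) h)
    have hn : 1 ≤ n := by
      by_contra hn0
      obtain rfl : n = 0 := by omega
      have h4 : Nat.primeCounting (4 * (0 + 1)) = 2 := by decide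
      have := hqp.two_le
      omega
    have hstep := primeCounting_step n hn
    rw [Finset.mem_image]
    refine ⟨n, ?_, ?_⟩
    · rw [hV, Finset.mem_filter, Finset.mem_Icc]
      refine ⟨⟨hn, by omega⟩, ?_⟩
      split_ifs at hstep with h1 h3 h3
      · exact ⟨h1, h3⟩
      all_goals omega
    · split_ifs at hstep <;> omega
  have hc := Finset.card_le_card hsub
  rw [Nat.primesLE_card_eq_primeCounting] at hc
  refine hc.trans ((Finset.card_union_le _ _).trans ?_)
  rw [Finset.card_range]
  exact Nat.add_le_add_right Finset.card_image_le _

/-! ### Comparison of the two estimates -/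

theorem stmt_16 (𝔖 : ℝ)
    (h𝔖 : 𝔖 = ∏' p : {p : ℕ // Nat.Prime p ∧ p ≠ 2}, (1 - 1 / ((p : ℝ) - 1) ^ 2))
    (hBH : Filter.Tendsto
      (fun N : ℕ =>
        (((Finset.Icc 1 N).filter
            (fun n => Nat.Prime (4 * n + 1) ∧ Nat.Prime (4 * n + 3))).card : ℝ) /
          (4 * 𝔖 * (N : ℝ) / (Real.log N) ^ 2))
      Filter.atTop (nhds 1)) :
    {a : ℕ | Nat.Prime a ∧ ∃ k : ℕ, 0 < k ∧ Nat.primeCounting (4 * k) = a}.Infinite := by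
  intro hfin
  obtain ⟨B, hB⟩ := hfin.bddAbove
  have hcount := primeCounting_le_twin_card B
    (fun q k hq hk he => hB ⟨hq, k, hk, he⟩)
  have hS : 𝔖 ≤ 45 / 64 := h𝔖 ▸ twinConst_le
  have t4 : Filter.Tendsto (fun N : ℕ => 4 * N) Filter.atTop Filter.atTop :=
    Filter.tendsto_id.const_mul_atTop' (by norm_num)
  have tP := Nat.tendsto_primeCounting.comp t4
  have e1 := t4.eventually eventually_primeCounting_ge_s16
  have e2 := tP.eventually eventually_primeCounting_ge_s16
  have e3 := hBH.eventually (gt_mem_nhds (show (1 : ℝ) < 1.01 by norm_num))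
  have e4 := hBH.eventually (lt_mem_nhds (show (0 : ℝ) < 1 by norm_num))
  have tlog := Real.tendsto_log_atTop.comp (tendsto_natCast_atTop_atTop (R := ℝ))
  have e5 := tlog.eventually (Filter.eventually_ge_atTop (100 * Real.log 4))
  have e6 := ((Real.isLittleO_pow_log_id_atTop (n := 2)).comp_tendsto
    (tendsto_natCast_atTop_atTop (R := ℝ))).bound
      (show (0 : ℝ) < 1 / (100 * (B + 1)) by positivity)
  obtain ⟨N, e1, e2, e3, e4, e5, e6, hN, hP2⟩ := (e1.and <| e2.and <| e3.and <| e4.and <| e5.and <|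
    e6.and <| (Filter.eventually_ge_atTop 1).and <|
      tP.eventually (Filter.eventually_ge_atTop 1)).exists
  have hc := hcount N
  simp only [Function.comp, id, Real.norm_eq_abs, Nat.abs_cast] at e1 e2 e5 e6 hP2
  set P := Nat.primeCounting (4 * N) with hP
  set V : ℝ := (((Finset.Icc 1 N).filter
    (fun n => Nat.Prime (4 * n + 1) ∧ Nat.Prime (4 * n + 3))).card : ℝ) with hV
  have hc' : (Nat.primeCounting P : ℝ) ≤ V + (B + 1) := by rw [hV]; exact_mod_cast hc
  have hNr : (1 : ℝ) ≤ N := by exact_mod_cast hN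
  have hPr : (1 : ℝ) ≤ P := by exact_mod_cast hP2
  have hPle : (P : ℝ) ≤ 4 * N := by
    have h : P ≤ 4 * N := by
      rw [hP, ← Nat.primesLE_card_eq_primeCounting]
      have hsub : Nat.primesLE (4 * N) ⊆ Finset.Icc 1 (4 * N) := fun p hp =>
        Finset.mem_Icc.mpr ⟨(Nat.prime_of_mem_primesLE hp).one_lt.le, Nat.le_of_mem_primesLE hp⟩
      simpa using Finset.card_le_card hsub
    exact_mod_cast h
  set L := Real.log N with hL
  have hl4 : 0 < Real.log 4 := Real.log_pos (by norm_num)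
  have hLpos : 0 < L := by linarith
  have hL4 : Real.log ((4 * N : ℕ) : ℝ) = Real.log 4 + L := by
    rw [Nat.cast_mul, Real.log_mul (by norm_num) (by positivity), hL]; norm_num
  rw [hL4] at e1
  set M := Real.log 4 + L with hM
  have hMpos : 0 < M := by positivity
  have hMle : M ≤ 1.01 * L := by linarith
  have hM2 : M ^ 2 ≤ 1.0201 * L ^ 2 := by nlinarith
  have hlogP : Real.log P ≤ M := by
    rw [← hL4]; push_cast; exact Real.log_le_log (by linarith) hPle
  push_cast at e1
  -- Chebyshev's bound applied to `4N` and then to `π(4N)`.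
  have hlower : 0.7396 * (4 * (N : ℝ)) ≤ Nat.primeCounting P * M ^ 2 := by
    have h1 : 0.86 * (P : ℝ) ≤ Nat.primeCounting P * M :=
      e2.trans (by gcongr)
    have h2 := mul_le_mul_of_nonneg_right h1 hMpos.le
    nlinarith
  have hV0 : 0 ≤ V := by positivity
  -- A positive quotient forces a positive denominator, since the numerator is nonnegative.
  have hD : 0 < 4 * 𝔖 * (N : ℝ) / L ^ 2 := by
    by_contra h
    exact absurd e4 (not_lt.mpr (div_nonpos_of_nonneg_of_nonpos hV0 (not_lt.mp h)))
  have hVle : V * L ^ 2 ≤ 1.01 * (45 / 64) * (4 * N) := by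
    have h1 := (div_lt_iff₀ hD).mp e3
    have h2 : V * L ^ 2 ≤ 1.01 * (4 * 𝔖 * (N : ℝ) / L ^ 2) * L ^ 2 := by gcongr
    have h3 : 1.01 * (4 * 𝔖 * (N : ℝ) / L ^ 2) * L ^ 2 = 1.01 * (4 * 𝔖 * N) := by
      field_simp
    rw [h3] at h2
    nlinarith
  have hB1 : (0 : ℝ) < B + 1 := by positivity
  have hsmall : (B + 1) * L ^ 2 ≤ N / 100 := by
    have h1 := (le_abs_self _).trans e6
    have h2 := mul_le_mul_of_nonneg_left h1 hB1.le
    have h3 : ((B : ℝ) + 1) * (1 / (100 * (B + 1)) * N) = N / 100 := by field_simp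
    linarith
  have hfinal : Nat.primeCounting P * M ^ 2 ≤ (V + (B + 1)) * (1.0201 * L ^ 2) := by gcongr
  nlinarith
end
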